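/- Let u : ℝ² → ℝ be three times continuously differentiable with all third-order partial derivatives bounded in absolute value by K on ℝ². Fix a point (x,y) ∈ ℝ² and h > 0, and set f = −(1/2)Δu(x,y) and g = −(1/2)(∂u/∂x)(x,y). Let θ be uniform on [−π/2, π/2] and t exponential of parameter 1, independent. Then | u(x,y) − E[ u(x + h t cos θ, y + h t sin θ) ] − (4g/π) h − f h² | ≤ 6 K h³. -/

import Mathlib

/-!
The increment is `h t (cos θ, sin θ)`. Expand `u` to second order at `(x, y)` and take expectations
term by term, using independence, `E[t] = 1`, `E[t²] = 2`, and the half circle averages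
`E[cos θ] = 2 / π`, `E[sin θ] = E[cos θ sin θ] = 0`, `E[cos² θ] = E[sin² θ] = 1 / 2` (`moment`).
The first order term contributes `(2 / π) h ∂u/∂x = -(4 g / π) h` and the second order term
`(h² / 2) Δu = -f h²`, which are exactly the two corrections of the scheme.

By `taylor_bound` the remainder is at most `(K / 6) (h t)³ (|cos θ| + |sin θ|)³`. The angular factor
is at most `4` and `E[t³] = 6`, so its expectation is at most `4 K h³ ≤ 6 K h³`.
-/

open MeasureTheory ProbabilityTheory Real

/-- The exponential law written as a density on `(0, ∞)`, so that its moments are literally Euler's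
integrals for the Gamma function. -/
lemma expMeasure_one_eq : expMeasure 1 =
    (volume.restrict (Set.Ioi (0 : ℝ))).withDensity (fun s => ENNReal.ofReal (exp (-s))) := by
  rw [← Measure.restrict_congr_set Ioi_ae_eq_Ici.symm, ← withDensity_indicator measurableSet_Ici]
  change volume.withDensity (exponentialPDF 1) = _
  congr 1
  ext s
  simp [exponentialPDF_eq, Set.indicator_apply]
  split_ifs <;> simp

lemma ae_nonneg_expMeasure : ∀ᵐ s ∂(expMeasure 1), 0 ≤ s := by
  rw [expMeasure_one_eq]
  refine (withDensity_absolutelyContinuous _ _).ae_le ?_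
  filter_upwards [ae_restrict_mem measurableSet_Ioi] with s hs using le_of_lt hs

lemma integrable_pow_expMeasure (k : ℕ) : Integrable (fun s : ℝ => s ^ k) (expMeasure 1) := by
  rw [expMeasure_one_eq, integrable_withDensity_iff_integrable_smul' (by fun_prop) (by simp)]
  refine (GammaIntegral_convergent (s := k + 1) (by positivity)).congr ?_
  filter_upwards with s
  simp [ENNReal.toReal_ofReal (exp_pos _).le]

lemma integral_pow_expMeasure (k : ℕ) : ∫ s, s ^ k ∂(expMeasure 1) = k.factorial := by
  rw [expMeasure_one_eq, integral_withDensity_eq_integral_toReal_smul (by fun_prop) (by simp),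
    ← Gamma_nat_eq_factorial, Gamma_eq_integral (by positivity)]
  refine integral_congr_ae ?_
  filter_upwards with s
  simp [ENNReal.toReal_ofReal (exp_pos _).le]

/-- The mean of a function under the uniform law on the half circle; both sides use the junk value
`0` when `F` is not integrable. -/
lemma integral_uniform (F : ℝ → ℝ) :
    ∫ s, F s ∂(ProbabilityTheory.cond volume (Set.Icc (-(π / 2)) (π / 2))) =
      π⁻¹ * ∫ s in (-(π / 2))..(π / 2), F s := by
  have hpi := pi_pos
  rw [ProbabilityTheory.cond, integral_smul_measure, intervalIntegral.integral_of_le (by linarith),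
    integral_Icc_eq_integral_Ioc, Real.volume_Icc, ENNReal.toReal_inv,
    ENNReal.toReal_ofReal (by linarith), smul_eq_mul]
  ring_nf

lemma integral_cos_half_circle : ∫ s in (-(π / 2))..(π / 2), cos s = 2 := by
  simp; norm_num

lemma integral_sin_half_circle : ∫ s in (-(π / 2))..(π / 2), sin s = 0 := by
  simp

lemma integral_cos_mul_cos_half_circle : ∫ s in (-(π / 2))..(π / 2), cos s * cos s = π / 2 := by
  simp [← pow_two, integral_cos_sq]

lemma integral_sin_mul_sin_half_circle : ∫ s in (-(π / 2))..(π / 2), sin s * sin s = π / 2 := by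
  simp [← pow_two, integral_sin_sq]

lemma integral_cos_mul_sin_half_circle : ∫ s in (-(π / 2))..(π / 2), cos s * sin s = 0 := by
  simp_rw [mul_comm (cos _)]
  simp

/-- Expansion of a multilinear map on the diagonal into its values on the canonical basis. -/
lemma multilinear_expand {n : ℕ} (A : ContinuousMultilinearMap ℝ (fun _ : Fin n => ℝ × ℝ) ℝ) (X Y : ℝ) :
    A (fun _ => (X, Y)) = ∑ r : Fin n → Fin 2, (∏ i, ![X, Y] (r i)) * 
      A (fun i => ![((1, 0) : ℝ × ℝ), (0, 1)] (r i)) := by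
  have : (X, Y) = ∑ j : Fin 2, ![X, Y] j • ![((1, 0) : ℝ × ℝ), (0, 1)] j := by
    simp
  simp_rw [this, ContinuousMultilinearMap.map_sum, ContinuousMultilinearMap.map_smul_univ, smul_eq_mul]

/-- The quadratic case, with the two mixed terms kept apart: they will be averaged out separately, so
the symmetry of second derivatives is never used. -/
lemma second_expand (A : ContinuousMultilinearMap ℝ (fun _ : Fin 2 => ℝ × ℝ) ℝ) (X Y : ℝ) :
    A (fun _ => (X, Y)) = X * X * A ![(1, 0), (1, 0)] + X * Y * A ![(1, 0), (0, 1)]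
      + X * Y * A ![(0, 1), (1, 0)] + Y * Y * A ![(0, 1), (0, 1)] := by
  have e (i j : Fin 2) : (fun k => ![((1, 0) : ℝ × ℝ), (0, 1)] (![i, j] k)) =
      ![![((1, 0) : ℝ × ℝ), (0, 1)] i, ![((1, 0) : ℝ × ℝ), (0, 1)] j] := by
    ext k <;> fin_cases k <;> rfl
  rw [multilinear_expand, ← (finTwoArrowEquiv (Fin 2)).symm.sum_comp, Fintype.sum_prod_type]
  simp only [finTwoArrowEquiv_symm_apply, e, Fin.sum_univ_two, Fin.prod_univ_two]
  simp
  ring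

/-- A bound on the basis values of a trilinear form bounds its diagonal values through the `ℓ¹` norm. -/
lemma third_bound (A : ContinuousMultilinearMap ℝ (fun _ : Fin 3 => ℝ × ℝ) ℝ) (K : ℝ)
    (hK : ∀ v₁ v₂ v₃ : ℝ × ℝ,
      v₁ ∈ ({(1, 0), (0, 1)} : Set (ℝ × ℝ)) → v₂ ∈ ({(1, 0), (0, 1)} : Set (ℝ × ℝ)) →
      v₃ ∈ ({(1, 0), (0, 1)} : Set (ℝ × ℝ)) → |A ![v₁, v₂, v₃]| ≤ K) (X Y : ℝ) :
    |A (fun _ => (X, Y))| ≤ K * (|X| + |Y|) ^ 3 := by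
  have hm (j : Fin 2) : ![((1, 0) : ℝ × ℝ), (0, 1)] j ∈ ({(1, 0), (0, 1)} : Set (ℝ × ℝ)) := by
    fin_cases j <;> simp
  have hb (r : Fin 3 → Fin 2) : |A (fun i => ![((1, 0) : ℝ × ℝ), (0, 1)] (r i))| ≤ K := by
    convert hK _ _ _ (hm (r 0)) (hm (r 1)) (hm (r 2)) using 3
    ext k <;> fin_cases k <;> rfl
  have hs : (|X| + |Y|) ^ 3 = ∑ r : Fin 3 → Fin 2, ∏ i, |![X, Y] (r i)| := by
    rw [← Fintype.piFinset_univ, ← Finset.prod_univ_sum (fun _ => Finset.univ) (fun _ j => |![X, Y] j|)]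
    simp
  rw [multilinear_expand, hs, Finset.mul_sum]
  refine (Finset.abs_sum_le_sum_abs _ _).trans (Finset.sum_le_sum fun r _ => ?_)
  rw [abs_mul, Finset.abs_prod, mul_comm]
  gcongr
  exact hb r

/-- Second order Taylor expansion of `u` at `p`, with the remainder measured in the `ℓ¹` norm of the
increment. The constant `1 / 6` comes from `1 / 2 * ∫ (1 - t) ^ 2` over `[0, 1]`. -/
lemma taylor_bound (u : ℝ × ℝ → ℝ) (hu : ContDiff ℝ 3 u) (K : ℝ)
    (hK : ∀ p : ℝ × ℝ, ∀ v₁ v₂ v₃ : ℝ × ℝ,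
      v₁ ∈ ({(1, 0), (0, 1)} : Set (ℝ × ℝ)) → v₂ ∈ ({(1, 0), (0, 1)} : Set (ℝ × ℝ)) →
      v₃ ∈ ({(1, 0), (0, 1)} : Set (ℝ × ℝ)) →
      |iteratedFDeriv ℝ 3 u p ![v₁, v₂, v₃]| ≤ K) (p v : ℝ × ℝ) :
    |u (p + v) - (u p + fderiv ℝ u p v + 1 / 2 * iteratedFDeriv ℝ 2 u p (fun _ => v))| ≤
      K / 6 * (|v.1| + |v.2|) ^ 3 := by
  have h := map_add_eq_sum_add_integral_iteratedFDeriv (f := u) (x := p) (y := v) (n := 2)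
    (fun t _ => by exact_mod_cast hu.contDiffAt)
  set C := K * (|v.1| + |v.2|) ^ 3 with hC
  have hI : ‖∫ t in (0:ℝ)..1, (1 - t)^2 • iteratedFDeriv ℝ (2 + 1) u (p + t • v) (fun _ ↦ v)‖ ≤
      ∫ t in (0:ℝ)..1, (1 - t) ^ 2 * C := by
    refine intervalIntegral.norm_integral_le_of_norm_le zero_le_one ?_
      (Continuous.intervalIntegrable (by fun_prop) _ _)
    filter_upwards with t _
    rw [norm_smul, Real.norm_eq_abs, Real.norm_eq_abs, abs_of_nonneg (sq_nonneg _)]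
    gcongr
    exact third_bound _ K (hK _) v.1 v.2
  have hJ : ∫ t in (0:ℝ)..1, (1 - t) ^ 2 * C = C / 3 := by
    rw [intervalIntegral.integral_mul_const,
      intervalIntegral.integral_comp_sub_left (fun t => t ^ 2) 1]
    simp; ring
  rw [hJ, Real.norm_eq_abs] at hI
  rw [h]
  simp only [Finset.sum_range_succ, Finset.range_zero, Finset.sum_empty, iteratedFDeriv_zero_apply,
    iteratedFDeriv_one_apply]
  simp only [Nat.factorial, smul_eq_mul] at hI ⊢
  rw [show K / 6 * (|v.1| + |v.2|) ^ 3 = 1 / 2 * (C / 3) by rw [hC]; ring]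
  refine le_trans (le_of_eq ?_) (mul_le_mul_of_nonneg_left hI (by norm_num : (0:ℝ) ≤ 1 / 2))
  rw [← abs_of_pos (by norm_num : (0:ℝ) < 1 / 2), ← abs_mul]
  congr 1
  norm_num

/-- Mixed moments of the independent pair `(θ, t)`: the angular factor averages over the half circle
and `E[t ^ k] = k!`. -/
lemma moment {Ω : Type*} [MeasurableSpace Ω] (P : Measure Ω) [IsProbabilityMeasure P]
    (θ t : Ω → ℝ)
    (hθ : pdf.IsUniform θ (Set.Icc (-(π / 2)) (π / 2)) P)
    (hθm : AEMeasurable θ P) (htm : AEMeasurable t P)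
    (ht : P.map t = expMeasure 1)
    (hindep : IndepFun θ t P) (F : ℝ → ℝ) (hF : Continuous F) (hF1 : ∀ s, |F s| ≤ 1) (k : ℕ) :
    Integrable (fun ω => F (θ ω) * t ω ^ k) P ∧
    ∫ ω, F (θ ω) * t ω ^ k ∂P = π⁻¹ * (∫ s in (-(π / 2))..(π / 2), F s) * k.factorial := by
  have hk : Integrable (fun ω => t ω ^ k) P := by
    have := integrable_pow_expMeasure k
    rw [← ht] at this
    exact this.comp_aemeasurable htm
  refine ⟨hk.bdd_mul (c := 1) (hF.measurable.comp_aemeasurable hθm).aestronglyMeasurable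
    (by filter_upwards with ω using hF1 _), ?_⟩
  rw [hindep.integral_fun_comp_mul_comp (f := F) (g := fun s => s ^ k) hθm htm
    hF.aestronglyMeasurable (by fun_prop)]
  congr 1
  · rw [← integral_uniform, ← hθ, integral_map hθm hF.aestronglyMeasurable]
  · rw [← integral_pow_expMeasure, ← ht, integral_map htm (by fun_prop)]

/-- Kinetic approximation scheme for Neumann boundary conditions. If `u : ℝ² → ℝ`
is C³ with all third-order partial derivatives bounded by `K`, `f = -(1/2)Δu(x,y)`,
`g = -(1/2)∂u/∂x(x,y)`, θ uniform on [−π/2, π/2] and t exponential of parameter 1 independent,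
then `|u(x,y) − E[u(x + h t cos θ, y + h t sin θ)] − (4g/π)h − f h²| ≤ 6K h³`. -/
theorem stmt6 {Ω : Type*} [MeasurableSpace Ω] (P : Measure Ω) [IsProbabilityMeasure P]
    (u : ℝ × ℝ → ℝ) (hu : ContDiff ℝ 3 u) (K : ℝ)
    (hK : ∀ p : ℝ × ℝ, ∀ v₁ v₂ v₃ : ℝ × ℝ,
      v₁ ∈ ({(1, 0), (0, 1)} : Set (ℝ × ℝ)) → v₂ ∈ ({(1, 0), (0, 1)} : Set (ℝ × ℝ)) →
      v₃ ∈ ({(1, 0), (0, 1)} : Set (ℝ × ℝ)) →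
      |iteratedFDeriv ℝ 3 u p ![v₁, v₂, v₃]| ≤ K)
    (x y : ℝ) (h : ℝ) (hh : 0 < h) (f g : ℝ)
    (hf : f = -(1 / 2) * (iteratedFDeriv ℝ 2 u (x, y) ![(1, 0), (1, 0)] +
      iteratedFDeriv ℝ 2 u (x, y) ![(0, 1), (0, 1)]))
    (hg : g = -(1 / 2) * fderiv ℝ u (x, y) (1, 0))
    (θ t : Ω → ℝ)
    (hθ : pdf.IsUniform θ (Set.Icc (-(π / 2)) (π / 2)) P)
    (ht : P.map t = expMeasure 1)
    (hindep : IndepFun θ t P) :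
    |u (x, y) - (∫ ω, u (x + h * t ω * cos (θ ω), y + h * t ω * sin (θ ω)) ∂P) -
      (4 * g / π) * h - f * h ^ 2| ≤ 6 * K * h ^ 3 := by
  have hpi := pi_pos
  -- the hypothesis forces `K` to be nonnegative
  have hK0 : 0 ≤ K := (abs_nonneg _).trans (hK 0 (1, 0) (1, 0) (1, 0) (by simp) (by simp) (by simp))
  have hθm : AEMeasurable θ P := hθ.aemeasurable (by simp [hpi]) (by simp)
  have htm : AEMeasurable t P := by
    have := isProbabilityMeasure_expMeasure one_pos
    exact AEMeasurable.of_map_ne_zero (by rw [ht]; exact NeZero.ne _)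
  have ht0 : ∀ᵐ ω ∂P, 0 ≤ t ω := by
    have := ae_nonneg_expMeasure
    rw [← ht] at this
    exact ae_of_ae_map htm this
  have hc := abs_cos_le_one
  have hs := abs_sin_le_one
  have M := moment P θ t hθ hθm htm ht hindep
  obtain ⟨i1, e1⟩ := M cos continuous_cos hc 1
  obtain ⟨i2, e2⟩ := M sin continuous_sin hs 1
  obtain ⟨i3, e3⟩ := M (fun s => cos s * cos s) (by fun_prop)
    (fun s => by rw [abs_mul]; exact mul_le_one₀ (hc s) (abs_nonneg _) (hc s)) 2
  obtain ⟨i4, e4⟩ := M (fun s => sin s * sin s) (by fun_prop)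
    (fun s => by rw [abs_mul]; exact mul_le_one₀ (hs s) (abs_nonneg _) (hs s)) 2
  obtain ⟨i5, e5⟩ := M (fun s => cos s * sin s) (by fun_prop)
    (fun s => by rw [abs_mul]; exact mul_le_one₀ (hc s) (abs_nonneg _) (hs s)) 2
  obtain ⟨i6, e6⟩ := M (fun _ => 1) (by fun_prop) (by simp) 3
  rw [integral_cos_half_circle] at e1
  rw [integral_sin_half_circle] at e2
  rw [integral_cos_mul_cos_half_circle] at e3
  rw [integral_sin_mul_sin_half_circle] at e4
  rw [integral_cos_mul_sin_half_circle] at e5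
  simp only [intervalIntegral.integral_const, smul_eq_mul, one_mul] at e6 i6
  set a := fderiv ℝ u (x, y) (1, 0) with ha
  set b := fderiv ℝ u (x, y) (0, 1) with hb
  set A := iteratedFDeriv ℝ 2 u (x, y) with hA
  -- the second order Taylor polynomial of `u` at `(x, y)` along the random increment
  set Q : Ω → ℝ := fun ω => u (x, y) + (h * a) * (cos (θ ω) * t ω ^ 1)
    + (h * b) * (sin (θ ω) * t ω ^ 1)
    + (h ^ 2 / 2 * A ![(1, 0), (1, 0)]) * (cos (θ ω) * cos (θ ω) * t ω ^ 2)
    + (h ^ 2 / 2 * A ![(0, 1), (0, 1)]) * (sin (θ ω) * sin (θ ω) * t ω ^ 2)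
    + (h ^ 2 / 2 * (A ![(1, 0), (0, 1)] + A ![(0, 1), (1, 0)])) * (cos (θ ω) * sin (θ ω) * t ω ^ 2)
    with hQ
  set U : Ω → ℝ := fun ω => u (x + h * t ω * cos (θ ω), y + h * t ω * sin (θ ω)) with hU
  have j0 := integrable_const (μ := P) (u (x, y))
  have j1 := j0.add (i1.const_mul (h * a))
  have j2 := j1.add (i2.const_mul (h * b))
  have j3 := j2.add (i3.const_mul (h ^ 2 / 2 * A ![(1, 0), (1, 0)]))
  have j4 := j3.add (i4.const_mul (h ^ 2 / 2 * A ![(0, 1), (0, 1)]))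
  have j5 : Integrable Q P :=
    j4.add (i5.const_mul (h ^ 2 / 2 * (A ![(1, 0), (0, 1)] + A ![(0, 1), (1, 0)])))
  have hQint : ∫ ω, Q ω ∂P = u (x, y) - 4 * g / π * h - f * h ^ 2 := by
    have : ∫ ω, Q ω ∂P = u (x, y) + (h * a) * (π⁻¹ * 2 * (Nat.factorial 1))
      + (h * b) * (π⁻¹ * 0 * (Nat.factorial 1))
      + (h ^ 2 / 2 * A ![(1, 0), (1, 0)]) * (π⁻¹ * (π / 2) * (Nat.factorial 2))
      + (h ^ 2 / 2 * A ![(0, 1), (0, 1)]) * (π⁻¹ * (π / 2) * (Nat.factorial 2))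
      + (h ^ 2 / 2 * (A ![(1, 0), (0, 1)] + A ![(0, 1), (1, 0)])) *
        (π⁻¹ * 0 * (Nat.factorial 2)) := by
      refine (integral_add' j4 (i5.const_mul _)).trans ?_
      rw [integral_add' j3 (i4.const_mul _), integral_add' j2 (i3.const_mul _),
        integral_add' j1 (i2.const_mul _), integral_add' j0 (i1.const_mul _)]
      simp only [integral_const_mul, e1, e2, e3, e4, e5, integral_const, probReal_univ, one_smul]
    rw [this, hf, hg]
    simp [Nat.factorial]
    field_simp
    ring
  have hR : ∀ᵐ ω ∂P, ‖U ω - Q ω‖ ≤ (2 / 3 * K * h ^ 3) * t ω ^ 3 := by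
    filter_upwards [ht0] with ω hω
    have T := taylor_bound u hu K hK (x, y) (h * t ω * cos (θ ω), h * t ω * sin (θ ω))
    rw [second_expand, ← hA] at T
    have hl : fderiv ℝ u (x, y) (h * t ω * cos (θ ω), h * t ω * sin (θ ω)) =
        h * t ω * cos (θ ω) * a + h * t ω * sin (θ ω) * b := by
      rw [ha, hb, ← smul_eq_mul (h * t ω * cos (θ ω)), ← smul_eq_mul (h * t ω * sin (θ ω)),
        ← map_smul, ← map_smul, ← map_add]
      simp
    rw [hl] at T
    -- by Cauchy-Schwarz the `ℓ¹` norm of a unit vector is at most `√2`, and `√2 ^ 3 ≤ 4`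
    have hcs : (|cos (θ ω)| + |sin (θ ω)|) ^ 3 ≤ 4 := by
      have h2 : (|cos (θ ω)| + |sin (θ ω)|) ^ 2 ≤ 2 := by
        nlinarith [sq_abs (cos (θ ω)), sq_abs (sin (θ ω)), cos_sq_add_sin_sq (θ ω),
          sq_nonneg (|cos (θ ω)| - |sin (θ ω)|)]
      have h1 : |cos (θ ω)| + |sin (θ ω)| ≤ 2 := by linarith [hc (θ ω), hs (θ ω)]
      nlinarith [abs_nonneg (cos (θ ω)), abs_nonneg (sin (θ ω))]
    rw [Real.norm_eq_abs]
    calc |U ω - Q ω| ≤ K / 6 * (|h * t ω * cos (θ ω)| + |h * t ω * sin (θ ω)|) ^ 3 := by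
          refine le_trans (le_of_eq ?_) T
          simp only [hU, hQ, Prod.mk_add_mk]
          congr 1
          ring
      _ = K / 6 * (h * t ω) ^ 3 * (|cos (θ ω)| + |sin (θ ω)|) ^ 3 := by
          rw [abs_mul, abs_mul (h * t ω), abs_of_nonneg (by positivity : 0 ≤ h * t ω)]
          ring
      _ ≤ K / 6 * (h * t ω) ^ 3 * 4 := by gcongr
      _ = _ := by ring
  have hUm : AEStronglyMeasurable U P := by
    have : AEMeasurable (fun ω => (x + h * t ω * cos (θ ω), y + h * t ω * sin (θ ω))) P := by
      fun_prop
    exact (hu.continuous.measurable.comp_aemeasurable this).aestronglyMeasurable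
  have hUQ : Integrable (fun ω => U ω - Q ω) P :=
    (i6.const_mul _).mono' (hUm.sub j5.aestronglyMeasurable) hR
  -- `U` is integrable, so its expectation is not a junk value
  have hUi : Integrable U P := by
    have := hUQ.add j5
    refine this.congr (by filter_upwards with ω; simp)
  have hfin := norm_integral_le_of_norm_le (i6.const_mul _) hR
  rw [integral_sub hUi j5, integral_const_mul, e6, hQint, Real.norm_eq_abs, abs_sub_comm] at hfin
  have e6' : π⁻¹ * ((π / 2 - -(π / 2)) * 1) * (Nat.factorial 3) = 6 := by
    simp only [Nat.factorial]
    field_simp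
    norm_num
  rw [e6'] at hfin
  calc |u (x, y) - ∫ ω, U ω ∂P - 4 * g / π * h - f * h ^ 2|
      = |u (x, y) - 4 * g / π * h - f * h ^ 2 - ∫ ω, U ω ∂P| := by congr 1; ring
    _ ≤ 2 / 3 * K * h ^ 3 * 6 := hfin
    _ ≤ 6 * K * h ^ 3 := by nlinarith [mul_nonneg hK0 (pow_pos hh 3).le]
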